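/- arXiv:math/0612449 — 2 statements merged into one kernel-verified Lean document; each statement's English description precedes it below -/
import Mathlib

section
/- Let R = MvPolynomial (Fin n) ℂ, let s ⊆ Fin n, and let I ⊆ R be the ideal generated by {X_i : i ∈ s}. For every f ∈ R and every integer k ≥ 0 one has Σ_{l=0}^{k} ((−1)^l / l!) Σ_{(i_1,…,i_l) ∈ s^l} (∂_{i_1} ⋯ ∂_{i_l} f) · X_{i_1} ⋯ X_{i_l} − ε(f) ∈ I^{k+1}; that is, the alternating-sign derivative sum computes, modulo I^{k+1}, the result of setting all variables X_i with i ∈ s equal to zero. -/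
open MvPolynomial

/-- The substitution homomorphism `ε` sending `X i` to `0` for `i ∈ s` and fixing `X i`
for `i ∉ s`. -/
noncomputable def epsHom (n : ℕ) (s : Finset (Fin n)) :
    MvPolynomial (Fin n) ℂ →+* MvPolynomial (Fin n) ℂ :=
  (MvPolynomial.aeval fun i => if i ∈ s then 0 else MvPolynomial.X i).toRingHom

/-- The iterated formal partial derivative `∂_{c 0} ⋯ ∂_{c (l-1)}`. -/
noncomputable def iterPderiv {n : ℕ} {l : ℕ} (c : Fin l → Fin n)
    (f : MvPolynomial (Fin n) ℂ) : MvPolynomial (Fin n) ℂ :=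
  (List.ofFn c).foldr (fun i g => MvPolynomial.pderiv i g) f

/-- Recursive form of the `l`-th derivative sum. -/
noncomputable def derivSum (n : ℕ) (s : Finset (Fin n)) :
    ℕ → MvPolynomial (Fin n) ℂ →ₗ[ℂ] MvPolynomial (Fin n) ℂ
  | 0 => LinearMap.id
  | l + 1 => ∑ i ∈ s, (LinearMap.mulLeft ℂ (X i)) ∘ₗ (derivSum n s l) ∘ₗ
      (pderiv i : Derivation ℂ (MvPolynomial (Fin n) ℂ) (MvPolynomial (Fin n) ℂ)).toLinearMap

lemma derivSum_zero (n : ℕ) (s : Finset (Fin n)) (f : MvPolynomial (Fin n) ℂ) :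
    derivSum n s 0 f = f := rfl

lemma derivSum_succ (n : ℕ) (s : Finset (Fin n)) (l : ℕ) (f : MvPolynomial (Fin n) ℂ) :
    derivSum n s (l + 1) f = ∑ i ∈ s, X i * derivSum n s l (pderiv i f) := by
  simp [derivSum]

lemma foldr_pderiv_comm {n : ℕ} (L : List (Fin n)) (i : Fin n) (f : MvPolynomial (Fin n) ℂ) :
    pderiv i (L.foldr (fun i g => pderiv i g) f) =
      L.foldr (fun i g => pderiv i g) (pderiv i f) := by
  induction L with
  | nil => rfl
  | cons a L ih =>
    simp only [List.foldr_cons]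
    rw [← ih]
    have h : ⁅(pderiv i : Derivation ℂ (MvPolynomial (Fin n) ℂ) (MvPolynomial (Fin n) ℂ)),
        (pderiv a : Derivation ℂ (MvPolynomial (Fin n) ℂ) (MvPolynomial (Fin n) ℂ))⁆ = 0 := by
      apply MvPolynomial.derivation_ext
      intro j
      simp [Derivation.commutator_apply, pderiv_X, Pi.single_apply, apply_ite]
    have h2 := congrArg
      (fun D : Derivation ℂ (MvPolynomial (Fin n) ℂ) (MvPolynomial (Fin n) ℂ) =>
        D (L.foldr (fun i g => pderiv i g) f)) h
    simpa [Derivation.commutator_apply, sub_eq_zero] using h2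

lemma sum_eq_derivSum (n : ℕ) (s : Finset (Fin n)) (l : ℕ) (f : MvPolynomial (Fin n) ℂ) :
    (∑ c : Fin l → {i // i ∈ s}, iterPderiv (fun t => (c t : Fin n)) f *
        ∏ t : Fin l, MvPolynomial.X (c t : Fin n)) = derivSum n s l f := by
  induction l generalizing f with
  | zero => simp [iterPderiv, derivSum_zero]
  | succ l ih =>
    rw [derivSum_succ, ← Finset.sum_coe_sort s, 
      ← (Fin.consEquiv (fun _ => {i // i ∈ s})).sum_comp, Fintype.sum_prod_type]
    refine Finset.sum_congr rfl fun i _ => ?_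
    rw [← ih, Finset.mul_sum]
    refine Finset.sum_congr rfl fun c _ => ?_
    simp only [iterPderiv, Fin.consEquiv_apply, List.ofFn_succ, Fin.cons_zero, Fin.cons_succ,
      List.foldr_cons, Fin.prod_univ_succ, foldr_pderiv_comm]
    ring

lemma derivSum_X_mul_notMem (n : ℕ) (s : Finset (Fin n)) (l : ℕ) (j : Fin n) (hj : j ∉ s)
    (f : MvPolynomial (Fin n) ℂ) :
    derivSum n s l (X j * f) = X j * derivSum n s l f := by
  induction l generalizing f with
  | zero => rfl
  | succ l ih =>
    rw [derivSum_succ, derivSum_succ, Finset.mul_sum]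
    refine Finset.sum_congr rfl fun i hi => ?_
    have hij : j ≠ i := fun h => hj (h ▸ hi)
    rw [Derivation.leibniz, pderiv_X_of_ne hij]
    simp only [smul_eq_mul, mul_zero, add_zero]
    rw [ih]
    ring

lemma derivSum_X_mul_mem (n : ℕ) (s : Finset (Fin n)) (l : ℕ) (j : Fin n) (hj : j ∈ s)
    (f : MvPolynomial (Fin n) ℂ) :
    derivSum n s (l + 1) (X j * f) =
      X j * derivSum n s (l + 1) f + ((l : ℂ) + 1) • (X j * derivSum n s l f) := by
  have key : ∀ l, ∀ f : MvPolynomial (Fin n) ℂ, derivSum n s (l + 1) (X j * f) =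
      (∑ i ∈ s, X i * derivSum n s l (X j * pderiv i f)) + X j * derivSum n s l f := by
    intro l f
    rw [derivSum_succ]
    have : ∀ i ∈ s, X i * derivSum n s l (pderiv i (X j * f)) =
        X i * derivSum n s l (X j * pderiv i f) +
          (if j = i then X j * derivSum n s l f else 0) := by
      intro i _
      rw [Derivation.leibniz, map_add, mul_add]
      simp only [smul_eq_mul]
      congr 1
      split_ifs with h
      · subst h; simp
      · rw [pderiv_X_of_ne h]; simp
    rw [Finset.sum_congr rfl this, Finset.sum_add_distrib, Finset.sum_ite_eq, if_pos hj]
  induction l generalizing f with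
  | zero =>
    rw [key, derivSum_succ, Finset.mul_sum]
    simp only [derivSum_zero, Nat.cast_zero, zero_add, one_smul]
    congr 1
    exact Finset.sum_congr rfl fun i _ => by ring
  | succ l ih =>
    rw [key]
    have : ∀ i ∈ s, X i * derivSum n s (l + 1) (X j * pderiv i f) =
        X j * (X i * derivSum n s (l + 1) (pderiv i f)) +
         ((l : ℂ) + 1) • (X j * (X i * derivSum n s l (pderiv i f))) := by
      intro i _
      rw [ih, mul_add, mul_smul_comm]
      congr 1
      · ring
      · congr 1; ring
    rw [Finset.sum_congr rfl this, Finset.sum_add_distrib, ← Finset.smul_sum, ← Finset.mul_sum,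
      ← Finset.mul_sum, ← derivSum_succ, ← derivSum_succ]
    push_cast
    module

lemma derivSum_C (n : ℕ) (s : Finset (Fin n)) (l : ℕ) (a : ℂ) :
    derivSum n s (l + 1) (C a) = 0 := by
  simp [derivSum_succ]

lemma derivSum_mem (n : ℕ) (s : Finset (Fin n)) (l : ℕ) (f : MvPolynomial (Fin n) ℂ) :
    derivSum n s l f ∈ (Ideal.span (X '' (s : Set (Fin n)))) ^ l := by
  induction l generalizing f with
  | zero => simp
  | succ l ih =>
    rw [derivSum_succ, pow_succ']
    exact Ideal.sum_mem _ fun i hi => Ideal.mul_mem_mul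
      (Ideal.subset_span ⟨i, hi, rfl⟩) (ih _)

lemma alt_sum_X_mul (n : ℕ) (s : Finset (Fin n)) (k : ℕ) (j : Fin n) (hj : j ∈ s)
    (f : MvPolynomial (Fin n) ℂ) :
    ∑ l ∈ Finset.range (k + 1), ((-1 : ℂ) ^ l / (l.factorial : ℂ)) • derivSum n s l (X j * f) =
      ((-1 : ℂ) ^ k / (k.factorial : ℂ)) • (X j * derivSum n s k f) := by
  induction k with
  | zero => simp [derivSum_zero]
  | succ k ih =>
    rw [Finset.sum_range_succ, ih, derivSum_X_mul_mem n s k j hj, smul_add, smul_smul]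
    have h : ((-1 : ℂ) ^ (k + 1) / ((k + 1).factorial : ℂ)) * ((k : ℂ) + 1) =
        - ((-1 : ℂ) ^ k / (k.factorial : ℂ)) := by
      have h1 : (k.factorial : ℂ) ≠ 0 := by exact_mod_cast k.factorial_ne_zero
      have h2 : (k : ℂ) + 1 ≠ 0 := by exact_mod_cast k.succ_ne_zero
      rw [Nat.factorial_succ]
      push_cast
      field_simp
      ring
    rw [h]
    module

/-- formula (2.7) of the paper. Let `R = MvPolynomial (Fin n) ℂ`, `s` a
set of variable indices, and `I` the ideal generated by `{X i : i ∈ s}`. For every `f ∈ R`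
and every `k ≥ 0` one has
`Σ_{l=0}^{k} ((−1)^l / l!) Σ_{(i₁,…,i_l) ∈ s^l} (∂_{i₁} ⋯ ∂_{i_l} f) · X_{i₁} ⋯ X_{i_l}
 − ε(f) ∈ I^(k+1)`. -/
theorem alternating_derivative_sum_eq_restriction_mod_ideal_pow
    (n : ℕ) (s : Finset (Fin n)) (f : MvPolynomial (Fin n) ℂ) (k : ℕ) :
    (∑ l ∈ Finset.range (k + 1),
        ((-1 : ℂ) ^ l / (l.factorial : ℂ)) •
          ∑ c : Fin l → {i // i ∈ s},
            iterPderiv (fun t => (c t : Fin n)) f *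
              ∏ t : Fin l, MvPolynomial.X (c t : Fin n))
      - epsHom n s f
      ∈ (Ideal.span (MvPolynomial.X '' (s : Set (Fin n)))) ^ (k + 1) := by
  simp only [sum_eq_derivSum]
  induction f using MvPolynomial.induction_on with
  | C a =>
    rw [Finset.sum_range_succ']
    simp [derivSum_C, derivSum_zero, epsHom, MvPolynomial.algebraMap_eq]
  | add p q hp hq =>
    simp only [map_add, smul_add, Finset.sum_add_distrib]
    rw [add_sub_add_comm]
    exact Ideal.add_mem _ hp hq
  | mul_X p j hp =>
    rw [mul_comm p]
    by_cases hj : j ∈ s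
    · have he : epsHom n s (X j * p) = 0 := by simp [epsHom, hj]
      rw [alt_sum_X_mul n s k j hj, he, sub_zero, ← mul_smul_comm, pow_succ']
      refine Ideal.mul_mem_mul (Ideal.subset_span ⟨j, hj, rfl⟩) ?_
      exact Submodule.smul_of_tower_mem _ _ (derivSum_mem n s k p)
    · have he : epsHom n s (X j * p) = X j * epsHom n s p := by simp [epsHom, hj]
      simp only [derivSum_X_mul_notMem n s _ j hj, he, ← mul_smul_comm]
      rw [← Finset.mul_sum, ← mul_sub]
      exact Ideal.mul_mem_left _ _ hp
end

section
/- Let R = MvPolynomial (Fin n) ℂ, let s ⊆ Fin n, and let I ⊆ R be the ideal generated by {X_i : i ∈ s}. Let f ∈ R and let l ≥ 0 be an integer. If ∂_i f ∈ I^l for every i ∈ s, then f − ε(f) ∈ I^{l+1}. -/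
open MvPolynomial

theorem le_sum_of_mem_pow_aux (n : ℕ) (s : Finset (Fin n)) (l : ℕ) :
    ∀ p : MvPolynomial (Fin n) ℂ,
      p ∈ (Ideal.span (MvPolynomial.X '' (s : Set (Fin n)))) ^ l →
      ∀ m, coeff m p ≠ 0 → l ≤ ∑ i ∈ s, m i := by
  induction l with
  | zero => intros; exact Nat.zero_le _
  | succ l ih =>
    intro p hp
    rw [pow_succ] at hp
    refine Submodule.mul_induction_on hp ?_ ?_
    · intro a ha b hb m hm
      rw [coeff_mul] at hm
      obtain ⟨x, hx, hne⟩ := Finset.exists_ne_zero_of_sum_ne_zero hm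
      have h1 := ih a ha x.1 (left_ne_zero_of_mul hne)
      obtain ⟨i, hi, hxi⟩ := mem_ideal_span_X_image.1 hb x.2
        (mem_support_iff.2 (right_ne_zero_of_mul hne))
      have h2 : x.2 i ≤ ∑ i ∈ s, x.2 i :=
        Finset.single_le_sum (f := fun i => x.2 i) (fun _ _ => Nat.zero_le _) hi
      rw [← Finset.HasAntidiagonal.mem_antidiagonal.1 hx]
      simp only [Finsupp.add_apply, Finset.sum_add_distrib]
      omega
    · intro a b ha hb m hm
      by_cases h : coeff m a = 0
      · apply hb
        intro h'
        simp [h, h'] at hm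
      · exact ha m h

theorem monomial_mem_pow_aux (n : ℕ) (s : Finset (Fin n)) (l : ℕ) (m : Fin n →₀ ℕ) (c : ℂ)
    (h : l ≤ ∑ i ∈ s, m i) :
    monomial m c ∈ (Ideal.span (MvPolynomial.X '' (s : Set (Fin n)))) ^ l := by
  apply Ideal.pow_le_pow_right h
  rw [monomial_eq, Finsupp.prod_fintype _ _ (by simp), ← Finset.prod_mul_prod_compl s,
    ← Finset.prod_pow_eq_pow_sum]
  refine Ideal.mul_mem_left _ _ (Ideal.mul_mem_right _ _ (Ideal.prod_mem_prod ?_))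
  intro i hi
  exact Ideal.pow_mem_pow (Ideal.subset_span (Set.mem_image_of_mem X (Finset.mem_coe.2 hi))) _

/-- formula (2.8) of the paper. Let `R = MvPolynomial (Fin n) ℂ`, `s` a
set of variable indices, and `I` the ideal generated by `{X i : i ∈ s}`. Let `f ∈ R` and
`l ≥ 0`. If `∂ᵢ f ∈ I^l` for every `i ∈ s`, then `f − ε f ∈ I^(l+1)`. -/
theorem sub_restriction_mem_pow_succ_of_pderiv_mem_pow
    (n : ℕ) (s : Finset (Fin n)) (f : MvPolynomial (Fin n) ℂ) (l : ℕ)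
    (hf : ∀ i ∈ s, MvPolynomial.pderiv i f
        ∈ (Ideal.span (MvPolynomial.X '' (s : Set (Fin n)))) ^ l) :
    f - epsHom n s f ∈ (Ideal.span (MvPolynomial.X '' (s : Set (Fin n)))) ^ (l + 1) := by
  have hfs : f - epsHom n s f =
      ∑ m ∈ f.support, (monomial m (coeff m f) - epsHom n s (monomial m (coeff m f))) := by
    rw [Finset.sum_sub_distrib, ← map_sum, ← f.as_sum]
  rw [hfs]
  refine Ideal.sum_mem _ fun m hm => ?_
  have heps : epsHom n s (monomial m (coeff m f)) =
      C (coeff m f) * ∏ i, (if i ∈ s then (0 : MvPolynomial (Fin n) ℂ) else X i) ^ m i := by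
    change aeval _ _ = _
    rw [aeval_monomial, Finsupp.prod_fintype _ _ (by simp)]
    rfl
  rw [heps]
  by_cases h : ∀ i ∈ s, m i = 0
  · have : monomial m (coeff m f) =
      C (coeff m f) * ∏ i, (if i ∈ s then (0 : MvPolynomial (Fin n) ℂ) else X i) ^ m i := by
      rw [monomial_eq, Finsupp.prod_fintype _ _ (by simp)]
      congr 1
      refine Finset.prod_congr rfl fun i _ => ?_
      split_ifs with hi
      · simp [h i hi]
      · rfl
    rw [← this, sub_self]
    exact Ideal.zero_mem _
  · push Not at h
    obtain ⟨i, hi, hmi⟩ := h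
    rw [Finset.prod_eq_zero (Finset.mem_univ i) (by simp [hi, hmi]), mul_zero, sub_zero]
    apply monomial_mem_pow_aux
    have hm' : m - Finsupp.single i 1 + Finsupp.single i 1 = m :=
      Finsupp.sub_add_single_one_cancel hmi
    have key := le_sum_of_mem_pow_aux n s l _ (hf i hi) (m - Finsupp.single i 1) (by
      rw [coeff_pderiv, hm']
      exact mul_ne_zero (mem_support_iff.1 hm) (Nat.cast_add_one_ne_zero _))
    rw [← hm']
    simp only [Finsupp.add_apply, Finset.sum_add_distrib]
    have : ∑ j ∈ s, (Finsupp.single i 1 : Fin n →₀ ℕ) j = 1 := by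
      simp [Finsupp.single_apply, hi]
    omega
end
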